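/- Let n = 2k with k ≥ 2, and define the Boolean function f_n : {0,1}ⁿ → {0,1} by f_n(x) = 1 if and only if |x| ≥ k+1, or (|x| ≥ k and for every j ∈ {1,…,k} not both x_{2j−1} = 1 and x_{2j} = 1), where |x| = Σᵢ xᵢ. Suppose p is a real multilinear polynomial of degree at most 2 with nonnegative coefficients and no constant term, t ≥ 0, and for every x ∈ {0,1}ⁿ, f_n(x) = 1 iff p(x) ≥ t. Then for every pair 1 ≤ i < j ≤ k there exist a, b ∈ {0,1} such that the coefficient of x_{2i−a} x_{2j−b} in p is nonzero. Consequently, p has at least k(k−1)/2 quadratic terms, i.e., Ω(n²) terms. -/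

import Mathlib

open Finset

/-- Evaluation of a multilinear real polynomial in `n` variables given by its coefficient
function `c` (where `c S` is the coefficient of the monomial `∏ i ∈ S, x i`). -/
noncomputable def mEval {n : ℕ} (c : Finset (Fin n) → ℝ) (x : Fin n → ℝ) : ℝ :=
  ∑ S : Finset (Fin n), c S * ∏ i ∈ S, x i

/-- The real value of a Boolean. -/
noncomputable def bval (b : Bool) : ℝ := if b then 1 else 0

/-- The weight (number of ones) of a Boolean vector. -/
def wt {n : ℕ} (x : Fin n → Bool) : ℕ := ∑ i, if x i then 1 else 0

/-- The Boolean vector whose ones are the indices satisfying `P`. -/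
def indicatorVec (n : ℕ) (P : ℕ → Prop) [DecidablePred P] (v : Fin n) : Bool := decide (P v)

theorem sum_range_two_mul (g : ℕ → ℕ) (k : ℕ) :
    ∑ v ∈ range (2 * k), g v = ∑ m ∈ range k, (g (2 * m) + g (2 * m + 1)) := by
  induction k with
  | zero => simp
  | succ k ih =>
    rw [show 2 * (k + 1) = 2 * k + 1 + 1 by ring, sum_range_succ, sum_range_succ, ih,
      sum_range_succ]
    ring

theorem wt_indicatorVec (k : ℕ) (P : ℕ → Prop) [DecidablePred P] :
    wt (indicatorVec (2 * k) P) =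
      ∑ m ∈ range k, ((if P (2 * m) then 1 else 0) + if P (2 * m + 1) then 1 else 0) := by
  rw [← sum_range_two_mul (fun v => if P v then 1 else 0) k,
    ← Fin.sum_univ_eq_sum_range (fun v => if P v then 1 else 0)]
  simp [wt, indicatorVec]

theorem mEval_indicatorVec {n : ℕ} (coef : Finset (Fin n) → ℝ) (P : ℕ → Prop)
    [DecidablePred P] :
    mEval coef (fun v => bval (indicatorVec n P v)) =
      ∑ T : Finset (Fin n), coef T * if ∀ v ∈ T, P v then 1 else 0 := by
  unfold mEval
  refine sum_congr rfl fun T _ => ?_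
  simp only [bval, indicatorVec, decide_eq_true_eq]
  rw [prod_ite_zero]
  simp

/-- A block-transversal vector has weight `k`. -/
theorem wt_eq_of_transversal (k : ℕ) (P : ℕ → Prop) [DecidablePred P]
    (h : ∀ m, P (2 * m + 1) ↔ ¬ P (2 * m)) : wt (indicatorVec (2 * k) P) = k := by
  rw [wt_indicatorVec]
  trans ∑ m ∈ range k, 1
  · refine sum_congr rfl fun m _ => ?_
    by_cases hm : P (2 * m) <;> simp [h, hm]
  · simp

/-- Filling block `i`, emptying block `j`, and taking one element of each other block gives
weight `k`. -/
theorem wt_eq_of_full_empty (k i j : ℕ) (hi : i < k) (hj : j < k) (P : ℕ → Prop)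
    [DecidablePred P] (h : ∀ v, P v ↔ v = 2 * i + 1 ∨ (v % 2 = 0 ∧ v ≠ 2 * j)) :
    wt (indicatorVec (2 * k) P) = k := by
  have key : wt (indicatorVec (2 * k) P) + ∑ m ∈ range k, (if j = m then 1 else 0) =
      ∑ m ∈ range k, 1 + ∑ m ∈ range k, (if i = m then 1 else 0) := by
    rw [wt_indicatorVec, ← sum_add_distrib, ← sum_add_distrib]
    refine sum_congr rfl fun m _ => ?_
    simp only [h]
    split_ifs <;> omega
  simpa [hi, hj] using key

theorem eq_pair_of_card_le_two {α : Type*} [DecidableEq α] {T : Finset α} (hT : T.card ≤ 2)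
    {u v : α} (hu : u ∈ T) (hv : v ∈ T) (huv : u ≠ v) : T = {u, v} := by
  refine (eq_of_subset_of_card_le ?_ ?_).symm
  · simp [insert_subset_iff, hu, hv]
  · rwa [card_pair huv]

/-- Termwise form of the exchange inequality: a set avoiding one of the two blocks occurs in the
two transversal points at most as often as in the two points with a full block. -/
theorem exchange_indicator_le {n : ℕ} (i j : ℕ) (T : Finset (Fin n))
    (hT : (∀ v ∈ T, (v : ℕ) / 2 ≠ i) ∨ (∀ v ∈ T, (v : ℕ) / 2 ≠ j)) :
    ((if ∀ v ∈ T, (v : ℕ) % 2 = 0 then 1 else 0) +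
      if ∀ v ∈ T, ((v : ℕ) = 2 * i + 1 ∨ (v : ℕ) = 2 * j + 1 ∨
        ((v : ℕ) % 2 = 0 ∧ (v : ℕ) ≠ 2 * i ∧ (v : ℕ) ≠ 2 * j)) then 1 else 0 : ℝ) ≤
    (if ∀ v ∈ T, ((v : ℕ) = 2 * i + 1 ∨ ((v : ℕ) % 2 = 0 ∧ (v : ℕ) ≠ 2 * j)) then 1 else 0) +
      if ∀ v ∈ T, ((v : ℕ) = 2 * j + 1 ∨ ((v : ℕ) % 2 = 0 ∧ (v : ℕ) ≠ 2 * i)) then 1 else 0 := by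
  set A := ∀ v ∈ T, (v : ℕ) % 2 = 0
  set B := ∀ v ∈ T, ((v : ℕ) = 2 * i + 1 ∨ (v : ℕ) = 2 * j + 1 ∨
        ((v : ℕ) % 2 = 0 ∧ (v : ℕ) ≠ 2 * i ∧ (v : ℕ) ≠ 2 * j))
  set C := ∀ v ∈ T, ((v : ℕ) = 2 * i + 1 ∨ ((v : ℕ) % 2 = 0 ∧ (v : ℕ) ≠ 2 * j))
  set D := ∀ v ∈ T, ((v : ℕ) = 2 * j + 1 ∨ ((v : ℕ) % 2 = 0 ∧ (v : ℕ) ≠ 2 * i))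
  have hAB : A → B → C ∧ D := fun hA hB =>
    ⟨fun v hv => by have := hA v hv; have := hB v hv; omega,
      fun v hv => by have := hA v hv; have := hB v hv; omega⟩
  have hA : A → C ∨ D := fun hA => hT.symm.imp
    (fun h v hv => by have := hA v hv; have := h v hv; omega)
    (fun h v hv => by have := hA v hv; have := h v hv; omega)
  have hB : B → C ∨ D := fun hB => hT.symm.imp
    (fun h v hv => by have := hB v hv; have := h v hv; omega)
    (fun h v hv => by have := hB v hv; have := h v hv; omega)
  split_ifs <;> first | norm_num; done | (exfalso; tauto)

/-- Every positive QTF representation of `f_n` (with `n = 2k`, `k ≥ 2`) contains, for every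
pair of blocks `i < j`, a mixed quadratic term between the blocks with nonzero coefficient;
consequently it has at least `k(k-1)/2` quadratic terms, i.e. `Ω(n²)` terms.
(Variables are indexed `0, …, 2k-1`; block `i` consists of indices `2i, 2i+1`.) -/
theorem f_n_positive_qtf_lower (k : ℕ) (hk : 2 ≤ k) (f : (Fin (2 * k) → Bool) → Bool)
    (hf : ∀ x, f x = true ↔
      (k + 1 ≤ wt x ∨ (k ≤ wt x ∧
        ∀ j : Fin k, ¬(x ⟨2 * j, by omega⟩ = true ∧ x ⟨2 * j + 1, by omega⟩ = true))))
    (coef : Finset (Fin (2 * k)) → ℝ)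
    (hdeg : ∀ T, coef T ≠ 0 → T.card ≤ 2)
    (hnonneg : ∀ T, 0 ≤ coef T)
    (hconst : coef ∅ = 0)
    (t : ℝ) (ht : 0 ≤ t)
    (hrep : ∀ x : Fin (2 * k) → Bool, f x = true ↔ t ≤ mEval coef (fun i => bval (x i))) :
    (∀ i j : Fin k, i < j → ∃ a b : Fin 2,
      coef {⟨2 * (i : ℕ) + (a : ℕ), by omega⟩, ⟨2 * (j : ℕ) + (b : ℕ), by omega⟩} ≠ 0) ∧
    k * (k - 1) / 2 ≤ (Finset.univ.filter (fun T => coef T ≠ 0 ∧ T.card = 2)).card := by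
  have hmixed : ∀ i j : Fin k, i < j → ∃ a b : Fin 2,
      coef {⟨2 * (i : ℕ) + (a : ℕ), by omega⟩, ⟨2 * (j : ℕ) + (b : ℕ), by omega⟩} ≠ 0 := by
    intro i j hij
    by_contra! hzero
    have hne : (i : ℕ) ≠ j := (Fin.lt_def.mp hij).ne
    have hsep : ∀ T, coef T ≠ 0 →
        (∀ v ∈ T, (v : ℕ) / 2 ≠ i) ∨ (∀ v ∈ T, (v : ℕ) / 2 ≠ j) := by
      intro T hT
      by_contra! h
      obtain ⟨⟨u, hu, hui⟩, v, hv, hvj⟩ := h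
      have huv : u ≠ v := by rintro rfl; omega
      apply hT
      rw [eq_pair_of_card_le_two (hdeg T hT) hu hv huv]
      convert hzero ⟨u % 2, by omega⟩ ⟨v % 2, by omega⟩ using 4
      · simp only; omega
      · ext; simp only; omega
    have hle : mEval coef (fun v => bval (indicatorVec (2 * k) (fun v => v % 2 = 0) v)) +
        mEval coef (fun v => bval (indicatorVec (2 * k) (fun v => v = 2 * (i : ℕ) + 1 ∨
          v = 2 * (j : ℕ) + 1 ∨ (v % 2 = 0 ∧ v ≠ 2 * (i : ℕ) ∧ v ≠ 2 * (j : ℕ))) v)) ≤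
        mEval coef (fun v => bval (indicatorVec (2 * k) (fun v => v = 2 * (i : ℕ) + 1 ∨
          (v % 2 = 0 ∧ v ≠ 2 * (j : ℕ))) v)) +
        mEval coef (fun v => bval (indicatorVec (2 * k) (fun v => v = 2 * (j : ℕ) + 1 ∨
          (v % 2 = 0 ∧ v ≠ 2 * (i : ℕ))) v)) := by
      simp only [mEval_indicatorVec]
      rw [← sum_add_distrib, ← sum_add_distrib]
      refine sum_le_sum fun T _ => ?_
      rw [← mul_add, ← mul_add]
      by_cases hT : coef T = 0
      · simp [hT]
      · exact mul_le_mul_of_nonneg_left (exchange_indicator_le i j T (hsep T hT)) (hnonneg T)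
    have hge : ∀ (P : ℕ → Prop) [DecidablePred P], (∀ m, P (2 * m + 1) ↔ ¬ P (2 * m)) →
        t ≤ mEval coef (fun v => bval (indicatorVec (2 * k) P v)) := by
      intro P _ hP
      rw [← hrep, hf]
      refine Or.inr ⟨(wt_eq_of_transversal k P hP).ge, fun m => ?_⟩
      simp only [indicatorVec, decide_eq_true_eq, hP]
      tauto
    have hlt : ∀ (a b : Fin k) (_ : (a : ℕ) ≠ b), mEval coef (fun v => bval
        (indicatorVec (2 * k) (fun v => v = 2 * (a : ℕ) + 1 ∨
          (v % 2 = 0 ∧ v ≠ 2 * (b : ℕ))) v)) < t := by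
      intro a b hab
      rw [← not_le, ← hrep, hf,
        wt_eq_of_full_empty k a b a.2 b.2 _ fun _ => Iff.rfl]
      rintro (h | ⟨-, h⟩)
      · omega
      · apply h a
        simp only [indicatorVec, decide_eq_true_eq]
        exact ⟨Or.inr (by omega), Or.inl trivial⟩
    have h₁ := hge (fun v => v % 2 = 0) (fun m => by omega)
    have h₂ := hge (fun v => v = 2 * (i : ℕ) + 1 ∨ v = 2 * (j : ℕ) + 1 ∨
      (v % 2 = 0 ∧ v ≠ 2 * (i : ℕ) ∧ v ≠ 2 * (j : ℕ))) (fun m => by omega)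
    have h₃ := hlt i j hne
    have h₄ := hlt j i hne.symm
    linarith
  refine ⟨hmixed, ?_⟩
  let block : Fin (2 * k) → Fin k := fun v => ⟨v / 2, by omega⟩
  have hcard : k * (k - 1) / 2 = (powersetCard 2 (univ : Finset (Fin k))).card := by
    rw [card_powersetCard, card_univ, Fintype.card_fin, Nat.choose_two_right]
  rw [hcard]
  apply card_le_card_of_surjOn (fun T => T.image block)
  have hpair : ∀ i j : Fin k, i < j → ({i, j} : Finset (Fin k)) ∈ (fun T => T.image block) ''
      (univ.filter (fun T => coef T ≠ 0 ∧ T.card = 2) : Set (Finset (Fin (2 * k)))) := by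
    intro i j hij
    obtain ⟨a, b, hab⟩ := hmixed i j hij
    refine ⟨_, mem_coe.mpr (mem_filter.mpr ⟨mem_univ _, hab, card_pair ?_⟩), ?_⟩
    · rw [Ne, Fin.mk.injEq]
      omega
    · simp only [image_insert, image_singleton, block]
      congr 2
      · omega
      · ext
        simp only
        omega
  intro s hs
  obtain ⟨i, j, hij, rfl⟩ := card_eq_two.mp (mem_powersetCard.mp (mem_coe.mp hs)).2
  rcases lt_or_gt_of_ne hij with h | h
  · exact hpair i j h
  · rw [pair_comm]
    exact hpair j i h
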